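/- arXiv:1908.10934 — 2 statements merged into one kernel-verified Lean document; each statement's English description precedes it below -/
import Mathlib

section
/- For a weak composition c = (c_1,...,c_n) of n−1 (nonnegative integers summing to n−1), let S_c = {k ∈ {1,...,n−1} : c_1 + ... + c_k < k}. Then the divided symmetrization of the monomial x^c = x_1^{c_1}···x_n^{c_n} satisfies ⟨x^c⟩_n = (−1)^{|S_c|}·β(S_c), where β(S) is the number of permutations w ∈ S_n whose descent set {i : w(i) > w(i+1)} equals S. -/
open MvPolynomial

/-- The denominator `∏_{i=1}^{n-1} (x_i - x_{i+1})` of divided symmetrization. -/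
noncomputable def denomDS (n : ℕ) : MvPolynomial (Fin n) ℚ :=
  ∏ i : Fin (n - 1),
    (X (⟨i.1, by have := i.isLt; omega⟩ : Fin n) - X ⟨i.1 + 1, by have := i.isLt; omega⟩)

/-- Divided symmetrization `⟨f⟩_n = Σ_{w ∈ S_n} w·(f / ∏ (x_i - x_{i+1}))`, as an element of
the fraction field of `ℚ[x_1,...,x_n]`. -/
noncomputable def DS (n : ℕ) (f : MvPolynomial (Fin n) ℚ) :
    FractionRing (MvPolynomial (Fin n) ℚ) :=
  ∑ w : Equiv.Perm (Fin n),
    algebraMap (MvPolynomial (Fin n) ℚ) _ (rename w f) /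
      algebraMap (MvPolynomial (Fin n) ℚ) _ (rename w (denomDS n))

/-- The set `S_c ⊆ {1,...,n-1}`, encoded 0-based: `j : Fin (n-1)` corresponds to
`k = j+1`, and `j ∈ S_c` iff `c_1 + ⋯ + c_{j+1} < j+1`. -/
def Sset (n : ℕ) (c : Fin n → ℕ) : Finset (Fin (n - 1)) :=
  Finset.univ.filter
    (fun j => ∑ i ∈ Finset.univ.filter (fun i : Fin n => i.1 ≤ j.1), c i < j.1 + 1)

/-- The descent set of `w ∈ S_n`, encoded 0-based: `j : Fin (n-1)` corresponds to
the descent position `k = j+1`, i.e. `w(j) > w(j+1)` (0-based). -/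
def desSet (n : ℕ) (w : Equiv.Perm (Fin n)) : Finset (Fin (n - 1)) :=
  Finset.univ.filter
    (fun j => w ⟨j.1 + 1, by have := j.isLt; omega⟩ < w ⟨j.1, by have := j.isLt; omega⟩)

/-- `β(S)`: the number of permutations of `{1,...,n}` with descent set exactly `S`. -/
noncomputable def betaNum (n : ℕ) (S : Finset (Fin (n - 1))) : ℕ :=
  (Finset.univ.filter (fun w : Equiv.Perm (Fin n) => desSet n w = S)).card


/-- The Vandermonde product `∏_{i<j} (x_i - x_j)`. -/
noncomputable def vandermondePoly (n : ℕ) : MvPolynomial (Fin n) ℚ :=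
  ∏ i : Fin n, ∏ j ∈ Finset.Ioi i, (X i - X j)

theorem vandermondePoly_eq_det (n : ℕ) :
    vandermondePoly n =
      (Matrix.vandermonde fun i : Fin n => -(X i : MvPolynomial (Fin n) ℚ)).det := by
  simp only [Matrix.det_vandermonde, vandermondePoly, neg_sub_neg]

theorem rename_vandermondePoly {n : ℕ} (w : Equiv.Perm (Fin n)) :
    rename w (vandermondePoly n) = C ((Equiv.Perm.sign w : ℤ) : ℚ) * vandermondePoly n := by
  rw [vandermondePoly_eq_det, AlgHom.map_det]
  have h := Matrix.det_permute w
    (Matrix.vandermonde fun i : Fin n => -(X i : MvPolynomial (Fin n) ℚ))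
  rw [map_intCast, ← h]
  congr 1
  ext1 i j
  simp [Matrix.vandermonde_apply]

theorem vandermondePoly_ne_zero (n : ℕ) : vandermondePoly n ≠ 0 := by
  refine Finset.prod_ne_zero_iff.2 fun i _ => Finset.prod_ne_zero_iff.2 fun j hj => ?_
  rw [Finset.mem_Ioi] at hj
  exact sub_ne_zero.2 fun h => hj.ne (X_injective h)

theorem isHomogeneous_X_sub_X {σ : Type*} (a b : σ) :
    (X a - X b : MvPolynomial σ ℚ).IsHomogeneous 1 :=
  (isHomogeneous_X ℚ a).sub (isHomogeneous_X ℚ b)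

theorem isHomogeneous_vandermondePoly (n : ℕ) :
    (vandermondePoly n).IsHomogeneous (∑ i : Fin n, (i : ℕ)) := by
  have h : (∑ i : Fin n, (i : ℕ)) = ∑ i : Fin n, ∑ j ∈ Finset.Ioi i, 1 := by
    rw [← Equiv.sum_comp Fin.revPerm]
    refine Finset.sum_congr rfl fun i _ => ?_
    simp only [Fin.revPerm_apply, Fin.val_rev, Finset.sum_const, Fin.card_Ioi, smul_eq_mul]
    omega
  rw [h]
  exact IsHomogeneous.prod _ _ _ fun i _ => IsHomogeneous.prod _ _ _ fun j _ =>
    isHomogeneous_X_sub_X i j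

theorem isHomogeneous_denomDS (n : ℕ) : (denomDS n).IsHomogeneous (n - 1) := by
  have := IsHomogeneous.prod (R := ℚ) (σ := Fin n) Finset.univ
    (fun i : Fin (n - 1) =>
      (X (⟨i.1, by have := i.isLt; omega⟩ : Fin n) - X ⟨i.1 + 1, by have := i.isLt; omega⟩))
    (fun _ => 1) fun i _ => isHomogeneous_X_sub_X _ _
  simpa [denomDS] using this

/-- The consecutive factors can be split off the Vandermonde product. -/
theorem exists_vandermondePoly_eq_denomDS_mul (n : ℕ) :
    ∃ (q : ℕ) (Q : MvPolynomial (Fin n) ℚ), Q.IsHomogeneous q ∧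
      vandermondePoly n = denomDS n * Q := by
  refine ⟨∑ i : Fin n, ∑ j ∈ (Finset.Ioi i).filter (fun j => j.1 ≠ i.1 + 1), 1,
    ∏ i : Fin n, ∏ j ∈ (Finset.Ioi i).filter (fun j => j.1 ≠ i.1 + 1), (X i - X j),
    IsHomogeneous.prod _ _ _ fun i _ => IsHomogeneous.prod _ _ _ fun j _ =>
      isHomogeneous_X_sub_X i j, ?_⟩
  have hsplit : ∀ i : Fin n, ∏ j ∈ Finset.Ioi i, (X i - X j : MvPolynomial (Fin n) ℚ) =
      (∏ j ∈ (Finset.Ioi i).filter (fun j => j.1 = i.1 + 1), (X i - X j)) *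
      ∏ j ∈ (Finset.Ioi i).filter (fun j => j.1 ≠ i.1 + 1), (X i - X j) := fun i =>
    (Finset.prod_filter_mul_prod_filter_not _ _ _).symm
  rw [vandermondePoly, Finset.prod_congr rfl fun i _ => hsplit i, Finset.prod_mul_distrib]
  congr 1
  cases n with
  | zero => simp [denomDS]
  | succ m =>
    rw [Fin.prod_univ_castSucc]
    have hlast : (Finset.Ioi (Fin.last m)).filter
        (fun j => j.1 = (Fin.last m).1 + 1) = ∅ := by
      ext j; simp; omega
    rw [hlast, Finset.prod_empty, mul_one]
    refine Finset.prod_congr rfl fun i _ => ?_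
    have hs : (Finset.Ioi (Fin.castSucc i)).filter
        (fun j => j.1 = (Fin.castSucc i).1 + 1) = {i.succ} := by
      ext j
      simp only [Finset.mem_filter, Finset.mem_Ioi, Finset.mem_singleton, Fin.lt_def, Fin.ext_iff,
        Fin.val_castSucc, Fin.val_succ]
      omega
    rw [hs, Finset.prod_singleton]
    rfl

/-- An injective exponent vector of the minimal possible degree is a permutation of
`(0, 1, ..., n-1)`. -/
theorem exists_perm_apply_eq_of_injective {n : ℕ} {e : Fin n → ℕ} (he : Function.Injective e)
    (hsum : ∑ i, e i = ∑ i : Fin n, (i : ℕ)) :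
    ∃ σ : Equiv.Perm (Fin n), ∀ i, e (σ i) = i := by
  refine ⟨Tuple.sort e, ?_⟩
  have hmono : StrictMono (e ∘ Tuple.sort e) :=
    (Tuple.monotone_sort e).strictMono_of_injective (he.comp (Tuple.sort e).injective)
  have hle : ∀ k : ℕ, ∀ h : k < n, k ≤ e (Tuple.sort e ⟨k, h⟩) := by
    intro k
    induction k with
    | zero => simp
    | succ k ih =>
      intro h
      have h1 := ih (by omega)
      have h2 : (e ∘ Tuple.sort e) ⟨k, by omega⟩ < (e ∘ Tuple.sort e) ⟨k + 1, h⟩ :=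
        hmono (by simp [Fin.lt_def])
      simp only [Function.comp_apply] at h2
      omega
  have hs : ∑ i : Fin n, (i : ℕ) = ∑ i, e (Tuple.sort e i) := by
    rw [Equiv.sum_comp (Tuple.sort e) e, hsum]
  intro i
  exact ((Finset.sum_eq_sum_iff_of_le fun i _ => hle i.1 i.2).1 hs i (Finset.mem_univ i)).symm

/-- An alternating homogeneous polynomial of degree `0 + 1 + ⋯ + (n-1)` vanishes as soon as its
coefficient at `x_2 x_3^2 ⋯ x_n^{n-1}` does. -/
theorem eq_zero_of_alternating {n : ℕ} {A : MvPolynomial (Fin n) ℚ}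
    (hA : A.IsHomogeneous (∑ i : Fin n, (i : ℕ)))
    (halt : ∀ w : Equiv.Perm (Fin n), rename w A = C ((Equiv.Perm.sign w : ℤ) : ℚ) * A)
    (h0 : coeff (Finsupp.equivFunOnFinite.symm fun i : Fin n => (i : ℕ)) A = 0) : A = 0 := by
  have key : ∀ (w : Equiv.Perm (Fin n)) (m : Fin n →₀ ℕ),
      ((Equiv.Perm.sign w : ℤ) : ℚ) * coeff (m.mapDomain w) A = coeff m A := by
    intro w m
    rw [← coeff_rename_mapDomain w w.injective A m, halt, coeff_C_mul]
  ext m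
  rw [coeff_zero]
  by_cases hdeg : m.degree = ∑ i : Fin n, (i : ℕ)
  swap
  · exact hA.coeff_eq_zero hdeg
  by_cases hinj : Function.Injective m
  · obtain ⟨σ, hσ⟩ := exists_perm_apply_eq_of_injective hinj
      (by rw [← hdeg, Finsupp.degree_eq_sum])
    have hm : m = (Finsupp.equivFunOnFinite.symm fun i : Fin n => (i : ℕ)).mapDomain σ := by
      ext i
      obtain ⟨j, rfl⟩ := σ.surjective i
      rw [Finsupp.mapDomain_apply σ.injective, hσ]
      rfl
    have h := key σ (Finsupp.equivFunOnFinite.symm fun i : Fin n => (i : ℕ))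
    rw [h0, ← hm] at h
    exact (mul_eq_zero.1 h).resolve_left (by simp)
  · simp only [Function.Injective, not_forall] at hinj
    obtain ⟨i, j, hij, hne⟩ := hinj
    have hm : m.mapDomain (Equiv.swap i j) = m := by
      ext k
      obtain ⟨l, rfl⟩ := (Equiv.swap i j).surjective k
      rw [Finsupp.mapDomain_apply (Equiv.swap i j).injective]
      rcases eq_or_ne l i with rfl | hli
      · simp [hij]
      rcases eq_or_ne l j with rfl | hlj
      · simp [hij]
      · rw [Equiv.swap_apply_of_ne_of_ne hli hlj]
    have h := key (Equiv.swap i j) m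
    rw [hm, Equiv.Perm.sign_swap hne] at h
    push_cast at h
    linarith

/-- The symmetrized quotient is a rational constant, the same in every field in which the
variables are given distinct values. -/
theorem exists_symmetrization_eq_const {n : ℕ} {f : MvPolynomial (Fin n) ℚ}
    (hf : f.IsHomogeneous (n - 1)) :
    ∃ K : ℚ, ∀ (F : Type) [Field F] (φ : MvPolynomial (Fin n) ℚ →+* F),
      Function.Injective (fun i => φ (X i)) →
        ∑ w : Equiv.Perm (Fin n), φ (rename w f) / φ (rename w (denomDS n)) = φ (C K) := by
  obtain ⟨q, Q, hQ, hVQ⟩ := exists_vandermondePoly_eq_denomDS_mul n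
  set V := vandermondePoly n with hV
  have hV0 : V ≠ 0 := vandermondePoly_ne_zero n
  have hdeg : n - 1 + q = ∑ i : Fin n, (i : ℕ) := by
    refine IsHomogeneous.inj_right (φ := V) ?_ (isHomogeneous_vandermondePoly n) hV0
    rw [hVQ]
    exact (isHomogeneous_denomDS n).mul hQ
  set G : MvPolynomial (Fin n) ℚ :=
    ∑ w : Equiv.Perm (Fin n), C ((Equiv.Perm.sign w : ℤ) : ℚ) * rename w (f * Q) with hG
  have hGhom : G.IsHomogeneous (∑ i : Fin n, (i : ℕ)) := by
    rw [← hdeg]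
    exact IsHomogeneous.sum _ _ _ fun w _ =>
      ((hf.mul hQ).rename_isHomogeneous).C_mul _
  have hGalt : ∀ σ : Equiv.Perm (Fin n),
      rename σ G = C ((Equiv.Perm.sign σ : ℤ) : ℚ) * G := by
    intro σ
    rw [hG, map_sum, Finset.mul_sum]
    conv_rhs => rw [← Equiv.sum_comp (Equiv.mulLeft σ)]
    refine Finset.sum_congr rfl fun w _ => ?_
    rw [Equiv.coe_mulLeft, map_mul, rename_C, rename_rename, Equiv.Perm.coe_mul, ← mul_assoc,
      ← C_mul]
    congr 3
    rcases Int.units_eq_one_or (Equiv.Perm.sign σ) with h | h <;> simp [h]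
  set δ : Fin n →₀ ℕ := Finsupp.equivFunOnFinite.symm fun i : Fin n => (i : ℕ) with hδ
  have hcV : coeff δ V ≠ 0 := fun h => hV0
    (eq_zero_of_alternating (isHomogeneous_vandermondePoly n) rename_vandermondePoly h)
  have hGV : C (coeff δ V) * G - C (coeff δ G) * V = 0 := by
    refine eq_zero_of_alternating ((hGhom.C_mul _).sub
      ((isHomogeneous_vandermondePoly n).C_mul _)) (fun w => ?_) ?_
    · rw [map_sub, map_mul, map_mul, rename_C, rename_C, hGalt, hV, rename_vandermondePoly]
      ring
    · rw [coeff_sub, coeff_C_mul, coeff_C_mul]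
      ring
  have hGK : G = C (coeff δ G / coeff δ V) * V := by
    have h1 : C (coeff δ V)⁻¹ * (C (coeff δ V) * G) = C (coeff δ V)⁻¹ * (C (coeff δ G) * V) := by
      rw [sub_eq_zero.1 hGV]
    rw [← mul_assoc, ← mul_assoc, ← C_mul, ← C_mul, inv_mul_cancel₀ hcV, C_1, one_mul] at h1
    rw [div_eq_inv_mul]
    exact h1
  refine ⟨coeff δ G / coeff δ V, fun F _ φ hφ => ?_⟩
  have hφV : φ V ≠ 0 := by
    rw [hV, vandermondePoly, map_prod]
    refine Finset.prod_ne_zero_iff.2 fun i _ => ?_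
    rw [map_prod]
    refine Finset.prod_ne_zero_iff.2 fun j hj => ?_
    rw [Finset.mem_Ioi] at hj
    rw [map_sub]
    exact sub_ne_zero.2 fun h => hj.ne (hφ h)
  have hterm : ∀ w : Equiv.Perm (Fin n), φ (rename w f) / φ (rename w (denomDS n)) =
      φ (C ((Equiv.Perm.sign w : ℤ) : ℚ) * rename w (f * Q)) / φ V := by
    intro w
    have hw : rename w (denomDS n) * rename w Q = C ((Equiv.Perm.sign w : ℤ) : ℚ) * V := by
      rw [← map_mul, ← hVQ, rename_vandermondePoly]
    have hs : φ (C ((Equiv.Perm.sign w : ℤ) : ℚ)) * φ (C ((Equiv.Perm.sign w : ℤ) : ℚ)) = 1 := by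
      rw [← map_mul, ← C_mul]
      rcases Int.units_eq_one_or (Equiv.Perm.sign w) with h | h <;> simp [h]
    have hs0 : φ (C ((Equiv.Perm.sign w : ℤ) : ℚ)) ≠ 0 := left_ne_zero_of_mul_eq_one hs
    have hw' := congrArg φ hw
    rw [map_mul, map_mul] at hw'
    have hd : φ (rename w (denomDS n)) ≠ 0 := fun h => by
      rw [h, zero_mul] at hw'
      exact mul_ne_zero hs0 hφV hw'.symm
    rw [div_eq_div_iff hd hφV, map_mul, map_mul (rename w), map_mul φ]
    linear_combination (-φ (rename w f) * φ V) * hs +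
      (- φ (rename w f) * φ (C ((Equiv.Perm.sign w : ℤ) : ℚ))) * hw'
  rw [Finset.sum_congr rfl fun w _ => hterm w, ← Finset.sum_div, ← map_sum, ← hG]
  conv_lhs => rw [hGK]
  rw [map_mul, mul_div_cancel_right₀ _ hφV]

section HahnCoefficients

variable {Γ : Type*} [AddCommGroup Γ] [LinearOrder Γ] [IsOrderedAddMonoid Γ]

theorem HahnSeries.coeff_eq_zero_of_forall_coeff_add_nsmul {Y : HahnSeries Γ ℚ} {g e : Γ}
    (he : e < 0) (h : ∀ k : ℕ, Y.coeff (g + k • e) = Y.coeff g) : Y.coeff g = 0 := by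
  by_contra h0
  have hanti : StrictAnti fun k : ℕ => g + k • e := by
    refine strictAnti_nat_of_succ_lt fun k => ?_
    rw [succ_nsmul, ← add_assoc]
    exact add_lt_of_neg_right _ he
  refine Set.isWF_iff_no_descending_seq.1 Y.isWF_support _ hanti fun k => ?_
  rw [HahnSeries.mem_support, h k]
  exact h0

/-- The coefficients of `H / (1 - t^d)`, when `H` is supported on the kernel of a functional
taking the value `1` at `d`. -/
theorem HahnSeries.coeff_of_mul_one_sub_single_eq {d : Γ} {ψ : Γ →+ ℤ} (hψ : ψ d = 1)
    {H Y : HahnSeries Γ ℚ} (hH : ∀ g, ψ g ≠ 0 → H.coeff g = 0)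
    (hY : Y * (1 - HahnSeries.single d 1) = H) (g : Γ) :
    Y.coeff g = if (0 < d ↔ 0 ≤ ψ g) then
      (if 0 < d then 1 else -1) * H.coeff (g - ψ g • d) else 0 := by
  have hd0 : d ≠ 0 := by
    rintro rfl
    simp at hψ
  have hrec : ∀ g, Y.coeff g - Y.coeff (g - d) = H.coeff g := by
    intro g
    rw [← hY, mul_sub, mul_one, HahnSeries.coeff_sub, HahnSeries.coeff_mul_single, mul_one]
  have hstep : ∀ g, ψ g ≠ 0 → Y.coeff g = Y.coeff (g - d) := fun g hg => by
    rw [← sub_eq_zero, hrec, hH g hg]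
  have hdown : ∀ g, ψ g < 0 → ∀ k : ℕ, Y.coeff (g + k • (-d)) = Y.coeff g := by
    intro g hg k
    induction k with
    | zero => simp
    | succ k ih =>
      rw [← ih, hstep (g + k • (-d))]
      · congr 1
        rw [succ_nsmul]
        abel
      · rw [map_add, map_nsmul, map_neg, hψ]
        simp only [nsmul_eq_mul]
        omega
  have hup : ∀ g, 0 ≤ ψ g → ∀ k : ℕ, Y.coeff (g + k • d) = Y.coeff g := by
    intro g hg k
    induction k with
    | zero => simp
    | succ k ih =>
      rw [← ih, hstep (g + (k + 1) • d)]
      · congr 1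
        rw [succ_nsmul]
        abel
      · rw [map_add, map_nsmul, hψ]
        simp only [nsmul_eq_mul]
        push_cast
        omega
  have hker : ψ (g - ψ g • d) = 0 := by
    rw [map_sub, map_zsmul, hψ]
    simp
  have hrec0 := hrec (g - ψ g • d)
  rcases lt_or_gt_of_ne hd0 with hd | hd
  · have hpos : ∀ g, 0 ≤ ψ g → Y.coeff g = 0 := fun g hg =>
      HahnSeries.coeff_eq_zero_of_forall_coeff_add_nsmul hd (hup g hg)
    simp only [hd.not_gt, if_false, false_iff, not_le]
    split_ifs with hg
    · obtain ⟨m, hm⟩ : ∃ m : ℕ, ψ g = -((m : ℤ) + 1) := ⟨(-ψ g - 1).toNat, by omega⟩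
      have h1 := hdown (g - ψ g • d - d) (by rw [map_sub, hker, hψ]; norm_num) m
      have h2 : g - ψ g • d - d + m • (-d) = g := by
        rw [hm, neg_smul, add_smul, natCast_zsmul, one_smul, smul_neg]
        abel
      rw [h2] at h1
      rw [h1, ← hrec0, hpos _ hker.ge]
      ring
    · exact hpos g (not_lt.1 hg)
  · have hneg : ∀ g, ψ g < 0 → Y.coeff g = 0 := fun g hg =>
      HahnSeries.coeff_eq_zero_of_forall_coeff_add_nsmul (neg_lt_zero.2 hd) (hdown g hg)
    simp only [hd, if_true, true_iff]
    split_ifs with hg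
    · obtain ⟨m, hm⟩ : ∃ m : ℕ, ψ g = m := ⟨(ψ g).toNat, by omega⟩
      have h1 := hup (g - ψ g • d) hker.ge m
      rw [hm, natCast_zsmul, sub_add_cancel] at h1
      rw [hm, natCast_zsmul] at hrec0 hker ⊢
      rw [h1, ← hrec0, hneg (g - m • d - d) (by rw [map_sub, hker, hψ]; norm_num)]
      ring
    · exact hneg g (not_le.1 hg)

open Classical in
/-- The coefficients of a product of geometric series `1 / (1 - t^{d_i})`, where each series is
expanded in the direction that makes it summable and the `d_i` admit a dual family `ψ`. -/
theorem HahnSeries.coeff_prod_one_sub_single_inv {ι : Type*} {d : ι → Γ} {ψ : ι → Γ →+ ℤ}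
    (hψ : ∀ i j, ψ i (d j) = if i = j then 1 else 0) (s : Finset ι) (g : Γ) :
    (∏ i ∈ s, (1 - HahnSeries.single (d i) (1 : ℚ))⁻¹).coeff g =
      if g = ∑ i ∈ s, ψ i g • d i ∧ ∀ i ∈ s, (0 < d i ↔ 0 ≤ ψ i g) then
        ∏ i ∈ s, (if 0 < d i then 1 else -1) else 0 := by
  induction s using Finset.induction_on generalizing g with
  | empty => simp [HahnSeries.coeff_one]
  | insert a s ha ih =>
    have hda : ψ a (d a) = 1 := by simp [hψ]
    have hd0 : d a ≠ 0 := fun h => by simp [h] at hda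
    have hne : (1 - HahnSeries.single (d a) (1 : ℚ)) ≠ 0 := fun h => by
      have := congrArg (fun x => HahnSeries.coeff x 0) h
      simp [HahnSeries.coeff_single_of_ne hd0.symm] at this
    have hH : ∀ g, ψ a g ≠ 0 →
        (∏ i ∈ s, (1 - HahnSeries.single (d i) (1 : ℚ))⁻¹).coeff g = 0 := by
      intro g hg
      rw [ih, if_neg]
      rintro ⟨h, -⟩
      apply hg
      rw [h, map_sum]
      refine Finset.sum_eq_zero fun i hi => ?_
      rw [map_zsmul, hψ, if_neg (fun h : a = i => ha (h ▸ hi)), smul_zero]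
    rw [HahnSeries.coeff_of_mul_one_sub_single_eq hda hH
      (by rw [Finset.prod_insert ha, mul_comm, mul_inv_cancel_left₀ hne]), ih,
      Finset.sum_insert ha, Finset.prod_insert ha]
    have hψs : ∀ i ∈ s, ψ i (g - ψ a g • d a) = ψ i g := by
      intro i hi
      rw [map_sub, map_zsmul, hψ, if_neg (fun h : i = a => ha (h ▸ hi)), smul_zero, sub_zero]
    have hcond : (g - ψ a g • d a = ∑ i ∈ s, ψ i (g - ψ a g • d a) • d i ∧
        ∀ i ∈ s, (0 < d i ↔ 0 ≤ ψ i (g - ψ a g • d a))) ↔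
        (g = ψ a g • d a + ∑ i ∈ s, ψ i g • d i ∧ ∀ i ∈ s, (0 < d i ↔ 0 ≤ ψ i g)) := by
      refine and_congr ?_ (forall₂_congr fun i hi => by rw [hψs i hi])
      rw [Finset.sum_congr rfl fun i hi => by rw [hψs i hi], sub_eq_iff_eq_add']
    simp only [hcond, Finset.forall_mem_insert]
    by_cases h1 : (0 < d a ↔ 0 ≤ ψ a g)
    · rw [if_pos h1, mul_ite, mul_zero]
      simp only [h1, true_and]
    · rw [if_neg h1, if_neg fun h => h1 h.2.1]

end HahnCoefficients

/-- The exponent of the `a`-th variable in the lexicographically ordered exponent group. -/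
def lexUnit {n : ℕ} (a : Fin n) : Lex (Fin n → ℤ) := toLex (Pi.single a 1)

theorem lexUnit_strictAnti {n : ℕ} : StrictAnti (lexUnit (n := n)) := by
  intro a b hab
  refine ⟨a, fun j hj => ?_, ?_⟩
  · simp [lexUnit, Pi.single_eq_of_ne hj.ne, Pi.single_eq_of_ne (hj.trans hab).ne]
  · simp [lexUnit, Pi.single_eq_of_ne hab.ne]

/-- The sum of the coordinates `v (w 0), ..., v (w k)`. -/
def partialSum {n : ℕ} (w : Equiv.Perm (Fin n)) (k : ℕ) : Lex (Fin n → ℤ) →+ ℤ where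
  toFun v := ∑ j ∈ Finset.univ.filter (fun j : Fin n => j.1 ≤ k), ofLex v (w j)
  map_zero' := Finset.sum_eq_zero fun _ _ => rfl
  map_add' _ _ := (Finset.sum_congr rfl fun _ _ => rfl).trans Finset.sum_add_distrib

theorem partialSum_lexUnit {n : ℕ} (w : Equiv.Perm (Fin n)) (k : ℕ) (j : Fin n) :
    partialSum w k (lexUnit (w j)) = if j.1 ≤ k then 1 else 0 := by
  simp [partialSum, lexUnit, Pi.single_apply]

theorem eq_zero_of_partialSum_eq_zero {n : ℕ} (w : Equiv.Perm (Fin n)) {v : Lex (Fin n → ℤ)}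
    (h : ∀ k < n, partialSum w k v = 0) : v = 0 := by
  have key : ∀ j : Fin n, ofLex v (w j) = 0 := by
    intro j
    have h1 := h j j.2
    rcases Nat.eq_zero_or_pos j.1 with h0 | h0
    · have hs : Finset.univ.filter (fun i : Fin n => i.1 ≤ j.1) = {j} := by
        ext i
        simp [Fin.ext_iff, h0]
      simp only [partialSum, AddMonoidHom.coe_mk, ZeroHom.coe_mk] at h1
      rwa [hs, Finset.sum_singleton] at h1
    · have h2 := h (j.1 - 1) (by omega)
      have hs : Finset.univ.filter (fun i : Fin n => i.1 ≤ j.1) =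
          insert j (Finset.univ.filter (fun i : Fin n => i.1 ≤ j.1 - 1)) := by
        ext i
        simp only [Finset.mem_filter, Finset.mem_univ, true_and, Finset.mem_insert, Fin.ext_iff]
        omega
      simp only [partialSum, AddMonoidHom.coe_mk, ZeroHom.coe_mk] at h1 h2
      rw [hs, Finset.sum_insert (by simp; omega), h2, add_zero] at h1
      exact h1
  have hv : ofLex v = 0 := by
    funext i
    obtain ⟨j, rfl⟩ := w.surjective i
    exact key j
  exact ofLex.injective hv

/-- The embedding of polynomials into Hahn series which expands rational functions in the region
`x_1 ≫ x_2 ≫ ⋯ ≫ x_n`. -/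
noncomputable def hahnEval (n : ℕ) :
    MvPolynomial (Fin n) ℚ →+* HahnSeries (Lex (Fin n → ℤ)) ℚ :=
  eval₂Hom HahnSeries.C fun a => HahnSeries.single (-lexUnit a) 1

theorem hahnEval_X {n : ℕ} (a : Fin n) :
    hahnEval n (X a) = HahnSeries.single (-lexUnit a) 1 := by
  simp [hahnEval]

theorem HahnSeries.prod_single_one {Γ ι : Type*} [AddCommGroup Γ] [LinearOrder Γ]
    [IsOrderedAddMonoid Γ] (s : Finset ι) (e : ι → Γ) :
    ∏ i ∈ s, HahnSeries.single (e i) (1 : ℚ) = HahnSeries.single (∑ i ∈ s, e i) 1 := by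
  classical
  induction s using Finset.induction_on with
  | empty => simp
  | insert a s ha ih => rw [Finset.prod_insert ha, Finset.sum_insert ha, ih]; simp

theorem hahnEval_rename_monomial {n : ℕ} (c : Fin n → ℕ) (w : Equiv.Perm (Fin n)) :
    hahnEval n (rename w (∏ i, X i ^ c i)) =
      HahnSeries.single (-∑ i, c i • lexUnit (w i)) 1 := by
  simp only [map_prod, map_pow, rename_X, hahnEval_X, HahnSeries.single_pow, one_pow,
    HahnSeries.prod_single_one, neg_nsmul, Finset.sum_neg_distrib]

theorem hahnEval_rename_denomDS {n : ℕ} (w : Equiv.Perm (Fin n)) :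
    hahnEval n (rename w (denomDS n)) =
      HahnSeries.single (-∑ i : Fin (n - 1), lexUnit (w ⟨i.1, by omega⟩)) 1 *
        ∏ i : Fin (n - 1), (1 - HahnSeries.single
          (lexUnit (w ⟨i.1, by omega⟩) - lexUnit (w ⟨i.1 + 1, by omega⟩)) 1) := by
  rw [← Finset.sum_neg_distrib, ← HahnSeries.prod_single_one, ← Finset.prod_mul_distrib]
  simp only [denomDS, map_prod, map_sub, rename_X, hahnEval_X]
  refine Finset.prod_congr rfl fun i _ => ?_
  rw [mul_sub, mul_one, HahnSeries.single_mul_single]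
  congr 3
  · abel
  · simp

/-- The constant term of the expansion of a single summand of the divided symmetrization. -/
theorem coeff_zero_hahnEval_div {n : ℕ} (c : Fin n → ℕ) (hc : ∑ i, c i = n - 1)
    (w : Equiv.Perm (Fin n)) :
    (hahnEval n (rename w (∏ i, X i ^ c i)) / hahnEval n (rename w (denomDS n))).coeff 0 =
      if desSet n w = Sset n c then (-1) ^ (Sset n c).card else 0 := by
  set d : Fin (n - 1) → Lex (Fin n → ℤ) := fun i =>
    lexUnit (w ⟨i.1, by omega⟩) - lexUnit (w ⟨i.1 + 1, by omega⟩) with hd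
  set g : Lex (Fin n → ℤ) := (∑ i, c i • lexUnit (w i)) -
    ∑ i : Fin (n - 1), lexUnit (w ⟨i.1, by omega⟩) with hg
  have hψ : ∀ (k : ℕ) (j : Fin (n - 1)), partialSum w k (d j) = if k = j.1 then 1 else 0 := by
    intro k j
    simp only [hd, map_sub, partialSum_lexUnit]
    split_ifs <;> omega
  have hψg : ∀ k < n, partialSum w k g =
      (∑ i ∈ Finset.univ.filter (fun i : Fin n => i.1 ≤ k), (c i : ℤ)) -
        (Finset.univ.filter (fun i : Fin (n - 1) => i.1 ≤ k)).card := by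
    intro k _
    rw [hg, map_sub, map_sum, map_sum]
    simp only [map_nsmul, partialSum_lexUnit]
    simp [Finset.sum_filter]
  have hcard : ∀ k < n - 1,
      (Finset.univ.filter (fun i : Fin (n - 1) => i.1 ≤ k)).card = k + 1 := by
    intro k hk
    have : Finset.univ.filter (fun i : Fin (n - 1) => i.1 ≤ k) = Finset.Iic ⟨k, hk⟩ := by
      ext i
      simp [Fin.le_def]
    rw [this, Fin.card_Iic]
  have hgd : g = ∑ i, partialSum w i.1 g • d i := by
    rw [← sub_eq_zero]
    refine eq_zero_of_partialSum_eq_zero w fun k hk => ?_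
    rw [map_sub, map_sum]
    simp only [map_zsmul, hψ, smul_eq_mul, mul_ite, mul_one, mul_zero]
    by_cases hk' : k < n - 1
    · rw [Finset.sum_eq_single ⟨k, hk'⟩]
      · simp
      · intro i _ hi
        rw [if_neg]
        rintro rfl
        exact hi rfl
      · simp
    · rw [Finset.sum_eq_zero fun i _ => if_neg (by omega), sub_zero, hψg k hk]
      rw [Finset.filter_true_of_mem fun i _ => by omega,
        Finset.filter_true_of_mem fun i _ => by omega]
      rw [← Nat.cast_sum, hc]
      simp
  have hdpos : ∀ i, 0 < d i ↔ i ∉ desSet n w := by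
    intro i
    refine sub_pos.trans (lexUnit_strictAnti.lt_iff_gt.trans ?_)
    rw [desSet, Finset.mem_filter]
    simp only [Finset.mem_univ, true_and, not_lt]
    refine ⟨le_of_lt, fun h => lt_of_le_of_ne h fun h' => ?_⟩
    have := w.injective h'
    simp at this
  have hgpos : ∀ i : Fin (n - 1), 0 ≤ partialSum w i.1 g ↔ i ∉ Sset n c := by
    intro i
    rw [hψg i (by omega), hcard i i.2, Sset, Finset.mem_filter, ← Nat.cast_sum]
    simp only [Finset.mem_univ, true_and, not_lt]
    omega
  have hcoeff := HahnSeries.coeff_prod_one_sub_single_inv (d := d)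
    (ψ := fun i : Fin (n - 1) => partialSum w i.1)
    (fun i j => by simp only [hψ, Fin.ext_iff]) Finset.univ g
  beta_reduce at hcoeff
  have hquot : hahnEval n (rename w (∏ i, X i ^ c i)) / hahnEval n (rename w (denomDS n)) =
      HahnSeries.single (-g) 1 * ∏ i, (1 - HahnSeries.single (d i) (1 : ℚ))⁻¹ := by
    rw [hahnEval_rename_monomial, hahnEval_rename_denomDS, Finset.prod_inv_distrib, div_eq_mul_inv,
      mul_inv, HahnSeries.inv_single, ← mul_assoc, HahnSeries.single_mul_single]
    congr 3
    · rw [hg]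
      abel
    · simp
  rw [hquot, HahnSeries.coeff_single_mul, one_mul, zero_sub, neg_neg, hcoeff]
  have hcond : (g = ∑ i, partialSum w i.1 g • d i ∧
      ∀ i ∈ Finset.univ, (0 < d i ↔ 0 ≤ partialSum w i.1 g)) ↔ desSet n w = Sset n c := by
    simp only [← hgd, true_and, hdpos, hgpos, Finset.ext_iff, Finset.mem_univ, true_imp_iff,
      not_iff_not]
  by_cases h : desSet n w = Sset n c
  · rw [if_pos h]
    refine (if_pos (hcond.2 h)).trans ((Finset.prod_congr rfl
      (g := fun i => if i ∈ Sset n c then (-1 : ℚ) else 1) fun i _ => ?_).trans ?_)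
    · by_cases hi : i ∈ Sset n c
      · exact (if_neg fun h0 => (hdpos i).1 h0 (h ▸ hi)).trans (if_pos hi).symm
      · exact (if_pos ((hdpos i).2 (h ▸ hi))).trans (if_neg hi).symm
    · rw [Finset.prod_ite_mem, Finset.univ_inter, Finset.prod_const]
  · rw [if_neg h]
    exact if_neg (mt hcond.1 h)

/-- Postnikov's formula: for a weak composition `c` of `n-1` with `n` parts,
`⟨x^c⟩_n = (-1)^{|S_c|} β(S_c)`. -/
theorem stmt8 (n : ℕ) (c : Fin n → ℕ) (hc : ∑ i, c i = n - 1) :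
    DS n (∏ i, X i ^ c i) =
      algebraMap ℚ (FractionRing (MvPolynomial (Fin n) ℚ))
        ((-1 : ℚ) ^ (Sset n c).card * (betaNum n (Sset n c) : ℚ)) := by
  have hf : (∏ i, X i ^ c i : MvPolynomial (Fin n) ℚ).IsHomogeneous (n - 1) := by
    rw [← hc]
    exact IsHomogeneous.prod _ _ _ fun i _ => isHomogeneous_X_pow i (c i)
  obtain ⟨K, hK⟩ := exists_symmetrization_eq_const hf
  have hDS := hK (FractionRing (MvPolynomial (Fin n) ℚ)) (algebraMap _ _)
    ((IsFractionRing.injective _ _).comp X_injective)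
  have hCT := congrArg (fun x => HahnSeries.coeff x 0)
    (hK (HahnSeries (Lex (Fin n → ℤ)) ℚ) (hahnEval n) fun a b hab => by
      simp only [hahnEval_X] at hab
      have := congrArg HahnSeries.order hab
      rw [HahnSeries.order_single one_ne_zero, HahnSeries.order_single one_ne_zero] at this
      exact lexUnit_strictAnti.injective (neg_injective this))
  simp only [HahnSeries.coeff_sum, coeff_zero_hahnEval_div c hc] at hCT
  have hKval : K = (-1 : ℚ) ^ (Sset n c).card * (betaNum n (Sset n c) : ℚ) := by
    rw [← Finset.sum_filter, Finset.sum_const, nsmul_eq_mul, mul_comm] at hCT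
    rw [betaNum, hCT]
    simp only [hahnEval, coe_eval₂Hom, eval₂_C, HahnSeries.C_apply, HahnSeries.coeff_single_same]
  rw [DS, hDS, ← hKval, IsScalarTower.algebraMap_apply ℚ (MvPolynomial (Fin n) ℚ)]
  rfl
end

section
/- Let f be a quasisymmetric function homogeneous of degree n−1. Then for every m with 1 ≤ m ≤ n, ⟨f(x_1,...,x_m)⟩_n = Σ_{i=0}^{m−1} (−1)^i C(n,i) f(1^{m−i}). -/
open MvPolynomial

open scoped Classical

/-- The monomial quasisymmetric polynomial `M_α(x_1,...,x_m)` in `m` variables. -/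
noncomputable def Mq (m ℓ : ℕ) (α : Fin ℓ → ℕ) : MvPolynomial (Fin m) ℚ :=
  ∑ f ∈ Finset.univ.filter (fun f : Fin ℓ → Fin m => StrictMono f),
    ∏ j, X (f j) ^ α j

/-- A general quasisymmetric function homogeneous of degree `n-1`, specified by its
coefficients `c` on the monomial basis, restricted to `m` variables. -/
noncomputable def Pq (n : ℕ) (c : Composition (n - 1) → ℚ) (m : ℕ) :
    MvPolynomial (Fin m) ℚ :=
  ∑ α : Composition (n - 1), c α • Mq m α.length α.blocksFun

section DividedSymmetrization

variable {K : Type*} [Field K]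

/-- Extension of a finite sequence by zero. -/
def extendZero {n : ℕ} (z : Fin n → K) (k : ℕ) : K := if h : k < n then z ⟨k, h⟩ else 0

/-- The product of consecutive differences of the first `n` terms of a sequence. -/
def diffProd (n : ℕ) (u : ℕ → K) : K := ∏ k ∈ Finset.range (n - 1), (u k - u (k + 1))

/-- Divided symmetrization of a function of a sequence, evaluated at the point `y`. -/
def dsEval (n : ℕ) (F : (ℕ → K) → K) (y : Fin n → K) : K :=
  ∑ w : Equiv.Perm (Fin n), F (extendZero (y ∘ w)) / diffProd n (extendZero (y ∘ w))

/-- The alternating sum of multinomial coefficients over the subsets of `{j < n | s j < j}`. -/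
def petrov (s : ℕ → ℕ) (n : ℕ) : ℤ :=
  1 - ∑ j : Fin n, if s j < j then (n.choose j : ℤ) * petrov s j else 0
decreasing_by exact j.isLt

theorem petrov_eq (s : ℕ → ℕ) (n : ℕ) :
    petrov s n = 1 - ∑ j ∈ Finset.range n, if s j < j then (n.choose j : ℤ) * petrov s j else 0 := by
  rw [petrov, Finset.sum_range (n := n)]

theorem petrov_congr {s t : ℕ → ℕ} (n : ℕ) (h : ∀ j < n, s j = t j) : petrov s n = petrov t n := by
  induction n using Nat.strong_induction_on with
  | _ n ih =>
    rw [petrov_eq, petrov_eq t]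
    congr 1
    refine Finset.sum_congr rfl fun j hj => ?_
    have hj := Finset.mem_range.1 hj
    rw [h j hj, ih j hj fun i hi => h i (hi.trans hj)]

theorem extendZero_of_lt {n : ℕ} (z : Fin n → K) {k : ℕ} (h : k < n) :
    extendZero z k = z ⟨k, h⟩ := dif_pos h

theorem extendZero_natAdd {i k : ℕ} (z : Fin (i + k) → K) :
    extendZero (z ∘ Fin.natAdd i) = fun t => extendZero z (i + t) := by
  funext t
  by_cases h : t < k
  · rw [extendZero_of_lt _ h, extendZero_of_lt _ (by omega)]; rfl
  · rw [extendZero, extendZero, dif_neg h, dif_neg (by omega)]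

theorem extendZero_castAdd {i k : ℕ} (z : Fin (i + k) → K) {t : ℕ} (h : t < i) :
    extendZero (z ∘ Fin.castAdd k) t = extendZero z t := by
  rw [extendZero_of_lt _ h, extendZero_of_lt _ (by omega)]; rfl

theorem diffProd_congr {n : ℕ} {u v : ℕ → K} (h : ∀ k < n, u k = v k) :
    diffProd n u = diffProd n v := by
  refine Finset.prod_congr rfl fun k hk => ?_
  have := Finset.mem_range.1 hk
  rw [h k (by omega), h (k + 1) (by omega)]

theorem diffProd_add {i k : ℕ} (hi : 0 < i) (hk : 0 < k) (u : ℕ → K) :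
    diffProd (i + k) u =
      (u (i - 1) - u i) * diffProd i u * diffProd k (fun t => u (i + t)) := by
  obtain ⟨i, rfl⟩ : ∃ i', i = i' + 1 := ⟨i - 1, by omega⟩
  obtain ⟨k, rfl⟩ : ∃ k', k = k' + 1 := ⟨k - 1, by omega⟩
  rw [diffProd, show i + 1 + (k + 1) - 1 = (i + 1) + k by omega, Finset.prod_range_add,
    Finset.prod_range_succ]
  simp only [diffProd, Nat.add_sub_cancel, add_assoc]
  ring

theorem dsEval_congr {n : ℕ} {F G : (ℕ → K) → K} (h : ∀ u, F u = G u) (y : Fin n → K) :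
    dsEval n F y = dsEval n G y := by
  rw [show F = G from funext h]

theorem dsEval_sub {n : ℕ} (F G : (ℕ → K) → K) (y : Fin n → K) :
    dsEval n (fun u => F u - G u) y = dsEval n F y - dsEval n G y := by
  simp only [dsEval, sub_div, Finset.sum_sub_distrib]

theorem dsEval_add {n : ℕ} (F G : (ℕ → K) → K) (y : Fin n → K) :
    dsEval n (fun u => F u + G u) y = dsEval n F y + dsEval n G y := by
  simp only [dsEval, add_div, Finset.sum_add_distrib]

theorem dsEval_sum {n : ℕ} {ι : Type*} (s : Finset ι) (F : ι → (ℕ → K) → K) (y : Fin n → K) :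
    dsEval n (fun u => ∑ a ∈ s, F a u) y = ∑ a ∈ s, dsEval n (F a) y := by
  simp only [dsEval, Finset.sum_div]
  exact Finset.sum_comm

theorem dsEval_const_mul {n : ℕ} (a : K) (F : (ℕ → K) → K) (y : Fin n → K) :
    dsEval n (fun u => a * F u) y = a * dsEval n F y := by
  simp only [dsEval, mul_div_assoc, Finset.mul_sum]

/-- Symmetric factors can be pulled out of divided symmetrization. -/
theorem dsEval_sum_range_mul {n : ℕ} (F : (ℕ → K) → K) (y : Fin n → K) :
    dsEval n (fun u => (∑ k ∈ Finset.range n, u k) * F u) y = (∑ k, y k) * dsEval n F y := by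
  simp only [dsEval, mul_div_assoc, Finset.mul_sum]
  refine Finset.sum_congr rfl fun w _ => ?_
  congr 1
  rw [Finset.sum_range, ← Equiv.sum_comp w y]
  exact Finset.sum_congr rfl fun k _ => extendZero_of_lt _ k.isLt

/-- The averaged form of the product rule. -/
theorem dsEval_mul_average {i k : ℕ} (hi : 0 < i) (hk : 0 < k) (G H : (ℕ → K) → K)
    (hG : ∀ u v : ℕ → K, (∀ t < i, u t = v t) → G u = G v)
    {y : Fin (i + k) → K} (hy : Function.Injective y) :
    (i.factorial : K) * k.factorial *
        dsEval (i + k) (fun u => (u (i - 1) - u i) * (G u * H (fun t => u (i + t)))) y =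
      ∑ w : Equiv.Perm (Fin (i + k)),
        dsEval i G (y ∘ w ∘ Fin.castAdd k) * dsEval k H (y ∘ w ∘ Fin.natAdd i) := by
  set T : (Fin (i + k) → K) → K := fun z =>
    G (extendZero (z ∘ Fin.castAdd k)) / diffProd i (extendZero (z ∘ Fin.castAdd k)) *
      (H (extendZero (z ∘ Fin.natAdd i)) / diffProd k (extendZero (z ∘ Fin.natAdd i))) with hT
  have hF : dsEval (i + k) (fun u => (u (i - 1) - u i) * (G u * H (fun t => u (i + t)))) y =
      ∑ w : Equiv.Perm (Fin (i + k)), T (y ∘ w) := by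
    refine Finset.sum_congr rfl fun w _ => ?_
    have hne : extendZero (y ∘ w) (i - 1) - extendZero (y ∘ w) i ≠ 0 := by
      rw [extendZero_of_lt _ (by omega), extendZero_of_lt _ (by omega)]
      intro h
      have := (hy.comp w.injective) (sub_eq_zero.1 h)
      simp only [Fin.mk.injEq] at this
      omega
    simp only [hT]
    rw [extendZero_natAdd, diffProd_add hi hk,
      hG _ _ (fun t ht => extendZero_castAdd (k := k) (y ∘ w) ht),
      diffProd_congr (fun t ht => extendZero_castAdd (k := k) (y ∘ w) ht), mul_assoc,
      mul_div_mul_left _ _ hne, mul_div_mul_comm]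
  have hR : ∀ w : Equiv.Perm (Fin (i + k)),
      dsEval i G (y ∘ w ∘ Fin.castAdd k) * dsEval k H (y ∘ w ∘ Fin.natAdd i) =
        ∑ σ : Equiv.Perm (Fin i), ∑ τ : Equiv.Perm (Fin k),
          T (y ∘ (w * (finSumFinEquiv.permCongr (Equiv.sumCongr σ τ)) :
            Equiv.Perm (Fin (i + k)))) := by
    intro w
    rw [dsEval, dsEval, Finset.sum_mul_sum]
    refine Finset.sum_congr rfl fun σ _ => Finset.sum_congr rfl fun τ _ => ?_
    have h1 : (y ∘ (w * (finSumFinEquiv.permCongr (Equiv.sumCongr σ τ)) :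
        Equiv.Perm (Fin (i + k)))) ∘ Fin.castAdd k = (y ∘ w ∘ Fin.castAdd k) ∘ σ := by
      funext t; simp
    have h2 : (y ∘ (w * (finSumFinEquiv.permCongr (Equiv.sumCongr σ τ)) :
        Equiv.Perm (Fin (i + k)))) ∘ Fin.natAdd i = (y ∘ w ∘ Fin.natAdd i) ∘ τ := by
      funext t; simp
    simp only [hT]
    rw [h1, h2]
  rw [hF, Finset.sum_congr rfl fun w _ => hR w, Finset.sum_comm,
    Finset.sum_congr rfl fun σ _ => Finset.sum_comm]
  have : ∀ π : Equiv.Perm (Fin (i + k)),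
      ∑ w : Equiv.Perm (Fin (i + k)), T (y ∘ (w * π : Equiv.Perm (Fin (i + k)))) =
        ∑ w : Equiv.Perm (Fin (i + k)), T (y ∘ w) := fun π =>
    Equiv.sum_comp (Equiv.mulRight π) fun w : Equiv.Perm (Fin (i + k)) => T (y ∘ w)
  simp only [this, Finset.sum_const, Finset.card_univ, Fintype.card_perm, Fintype.card_fin,
    nsmul_eq_mul]
  ring

theorem dsEval_mul_eq_zero [CharZero K] {i k : ℕ} (hi : 0 < i) (hk : 0 < k) (G H : (ℕ → K) → K)
    (hG : ∀ u v : ℕ → K, (∀ t < i, u t = v t) → G u = G v)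
    (h : (∀ z : Fin i → K, Function.Injective z → dsEval i G z = 0) ∨
      ∀ z : Fin k → K, Function.Injective z → dsEval k H z = 0)
    {y : Fin (i + k) → K} (hy : Function.Injective y) :
    dsEval (i + k) (fun u => (u (i - 1) - u i) * (G u * H (fun t => u (i + t)))) y = 0 := by
  have key := dsEval_mul_average hi hk G H hG hy
  rw [Finset.sum_eq_zero] at key
  · have h1 : (i.factorial : K) ≠ 0 := Nat.cast_ne_zero.2 i.factorial_ne_zero
    have h2 : (k.factorial : K) ≠ 0 := Nat.cast_ne_zero.2 k.factorial_ne_zero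
    simpa [h1, h2] using key
  · intro w _
    rcases h with h | h
    · rw [h _ (hy.comp (w.injective.comp (Fin.castAdd_injective i k))), zero_mul]
    · rw [h _ (hy.comp (w.injective.comp (Fin.natAdd_injective k i))), mul_zero]

theorem dsEval_mul [CharZero K] {i k : ℕ} (hi : 0 < i) (hk : 0 < k) (G H : (ℕ → K) → K)
    (hG : ∀ u v : ℕ → K, (∀ t < i, u t = v t) → G u = G v) {a b : K}
    (ha : ∀ z : Fin i → K, Function.Injective z → dsEval i G z = a)
    (hb : ∀ z : Fin k → K, Function.Injective z → dsEval k H z = b)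
    {y : Fin (i + k) → K} (hy : Function.Injective y) :
    dsEval (i + k) (fun u => (u (i - 1) - u i) * (G u * H (fun t => u (i + t)))) y =
      (i + k).choose i * a * b := by
  have key := dsEval_mul_average hi hk G H hG hy
  rw [Finset.sum_congr rfl fun w _ => by
    rw [ha _ (hy.comp (w.injective.comp (Fin.castAdd_injective i k))),
      hb _ (hy.comp (w.injective.comp (Fin.natAdd_injective k i)))]] at key
  have h1 : (i.factorial : K) ≠ 0 := Nat.cast_ne_zero.2 i.factorial_ne_zero
  have h2 : (k.factorial : K) ≠ 0 := Nat.cast_ne_zero.2 k.factorial_ne_zero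
  have h3 : ((i + k).choose i : K) * i.factorial * k.factorial = (i + k).factorial := by
    rw [Nat.choose_symm_add]
    exact_mod_cast Nat.add_choose_mul_factorial_mul_factorial i k
  simp only [Finset.sum_const, Finset.card_univ, Fintype.card_perm, Fintype.card_fin,
    nsmul_eq_mul, ← h3] at key
  apply mul_left_cancel₀ (mul_ne_zero h1 h2)
  rw [key]
  ring

theorem dsEval_one_one (y : Fin 1 → K) : dsEval 1 (fun _ => 1) y = 1 := by
  simp [dsEval, diffProd]

/-- Summing over cyclic rotations, divided symmetrization kills constants. -/
theorem dsEval_one_eq_zero [CharZero K] {n : ℕ} (hn : 2 ≤ n) {y : Fin n → K}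
    (hy : Function.Injective y) : dsEval n (fun _ => 1) y = 0 := by
  obtain ⟨N, rfl⟩ : ∃ N, n = N + 1 := ⟨n - 1, by omega⟩
  have key : ∀ z : Fin (N + 1) → K, Function.Injective z →
      ∑ k : Fin (N + 1), 1 / diffProd (N + 1) (extendZero (z ∘ Equiv.addRight k)) = 0 := by
    intro z hz
    have hP : ∀ k : Fin (N + 1), 1 / diffProd (N + 1) (extendZero (z ∘ Equiv.addRight k)) =
        (z (Fin.last N + k) - z k) / ∏ i, (z i - z (i + 1)) := by
      intro k
      have h1 : diffProd (N + 1) (extendZero (z ∘ Equiv.addRight k)) =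
          ∏ i : Fin N, (z (i.castSucc + k) - z (i.succ + k)) := by
        rw [diffProd, Nat.add_sub_cancel, Finset.prod_range]
        refine Finset.prod_congr rfl fun i _ => ?_
        rw [extendZero_of_lt _ (by omega), extendZero_of_lt _ (by omega)]
        rfl
      have h2 : ∏ i, (z i - z (i + 1)) =
          (∏ i : Fin N, (z (i.castSucc + k) - z (i.succ + k))) * (z (Fin.last N + k) - z k) := by
        rw [← Equiv.prod_comp (Equiv.addRight k), Fin.prod_univ_castSucc]
        simp only [Equiv.coe_addRight]
        congr 1
        · refine Finset.prod_congr rfl fun i _ => ?_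
          rw [add_right_comm, Fin.coeSucc_eq_succ]
        · rw [add_right_comm, Fin.last_add_one, zero_add]
      have h3 : z (Fin.last N + k) - z k ≠ 0 := by
        intro h
        have := hz (sub_eq_zero.1 h)
        rw [add_eq_right] at this
        have := congrArg Fin.val this
        simp at this
        omega
      rw [h1, h2]
      field_simp
    rw [Finset.sum_congr rfl fun k _ => hP k, ← Finset.sum_div, Finset.sum_sub_distrib,
      show ∑ k, z (Fin.last N + k) = ∑ k, z k from Equiv.sum_comp (Equiv.addLeft (Fin.last N)) z,
      sub_self, zero_div]
  have hsum : ∑ k : Fin (N + 1), dsEval (N + 1) (fun _ => 1) y = 0 := by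
    calc _ = ∑ k : Fin (N + 1), ∑ w : Equiv.Perm (Fin (N + 1)),
          1 / diffProd (N + 1) (extendZero ((y ∘ w) ∘ Equiv.addRight k)) :=
        Finset.sum_congr rfl fun k _ => (Equiv.sum_comp (Equiv.mulRight (Equiv.addRight k))
          fun w : Equiv.Perm (Fin (N + 1)) => 1 / diffProd (N + 1) (extendZero (y ∘ w))).symm
      _ = 0 := by
        rw [Finset.sum_comm]
        exact Finset.sum_eq_zero fun w _ => key _ (hy.comp w.injective)
  rw [Finset.sum_const, Finset.card_univ, Fintype.card_fin, nsmul_eq_mul] at hsum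
  exact (mul_eq_zero.1 hsum).resolve_left (by exact_mod_cast N.succ_ne_zero)

theorem sum_range_mul_sub (n : ℕ) (u : ℕ → K) :
    ∑ j ∈ Finset.range n, ((n - j : ℕ) : K) * (u j - u (j + 1)) =
      (n + 1) * u 0 - ∑ k ∈ Finset.range (n + 1), u k := by
  induction n with
  | zero => simp
  | succ n ih =>
    rw [Finset.sum_range_succ, Finset.sum_range_succ _ (n + 1)]
    have : ∑ j ∈ Finset.range n, ((n + 1 - j : ℕ) : K) * (u j - u (j + 1)) =
        ∑ j ∈ Finset.range n, ((n - j : ℕ) : K) * (u j - u (j + 1)) + (u 0 - u n) := by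
      rw [← Finset.sum_range_sub', ← Finset.sum_add_distrib]
      refine Finset.sum_congr rfl fun j hj => ?_
      rw [Nat.succ_sub (Finset.mem_range.1 hj).le]
      push_cast
      ring
    rw [this, ih, show n + 1 - n = 1 by omega]
    push_cast
    ring

theorem dsEval_pow_zero [CharZero K] (a : ℕ) : ∀ (n : ℕ), a + 1 ≤ n → ∀ y : Fin n → K,
    Function.Injective y → dsEval n (fun u => u 0 ^ a) y = if a + 1 = n then 1 else 0 := by
  induction a with
  | zero =>
    intro n hn y hy
    simp only [pow_zero]
    split_ifs with h
    · obtain rfl : n = 1 := by omega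
      exact dsEval_one_one y
    · exact dsEval_one_eq_zero (by omega) hy
  | succ a ih =>
    intro n hn y hy
    obtain ⟨N, rfl⟩ : ∃ N, n = N + 1 + 1 := ⟨n - 2, by omega⟩
    have h0 : dsEval (N + 1 + 1) (fun u => u 0 ^ a) y = 0 := by
      rw [ih _ (by omega) y hy, if_neg (by omega)]
    have hterm : ∀ j < N, dsEval (N + 1 + 1) (fun u => (u j - u (j + 1)) * u 0 ^ a) y = 0 := by
      intro j hj
      obtain ⟨k, hk⟩ : ∃ k, N + 1 + 1 = (j + 1) + k := ⟨N + 1 - j, by omega⟩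
      have hk2 : 2 ≤ k := by omega
      clear h0
      revert y
      rw [hk]
      intro y hy
      have := dsEval_mul_eq_zero (i := j + 1) (k := k) (by omega) (by omega)
        (fun u => u 0 ^ a) (fun _ => 1) (fun u v h => by simp only [h 0 (by omega)])
        (Or.inr fun z hz => dsEval_one_eq_zero hk2 hz) hy
      simpa using this
    have hlast : dsEval (N + 1 + 1) (fun u => (u N - u (N + 1)) * u 0 ^ a) y =
        (N + 1 + 1) * if a + 1 = N + 1 then 1 else 0 := by
      have := dsEval_mul (i := N + 1) (k := 1) (by omega) (by omega)
        (fun u => u 0 ^ a) (fun _ => 1) (fun u v h => by simp only [h 0 (by omega)])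
        (fun z hz => ih _ (by omega) z hz) (fun z _ => dsEval_one_one z) hy
      simpa using this
    have key : ((N + 1 : ℕ) + 1 : K) * dsEval (N + 1 + 1) (fun u => u 0 ^ (a + 1)) y =
        (N + 1 + 1) * if a + 1 = N + 1 then 1 else 0 := by
      rw [← dsEval_const_mul, dsEval_congr (G := fun u =>
        (∑ j ∈ Finset.range (N + 1), ((N + 1 - j : ℕ) : K) * ((u j - u (j + 1)) * u 0 ^ a)) +
          (∑ k ∈ Finset.range (N + 1 + 1), u k) * u 0 ^ a), dsEval_add, dsEval_sum_range_mul, h0,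
        dsEval_sum, Finset.sum_range_succ, Finset.sum_eq_zero, dsEval_const_mul, hlast]
      · simp
      · intro j hj
        rw [dsEval_const_mul, hterm j (Finset.mem_range.1 hj), mul_zero]
      · intro u
        have := sum_range_mul_sub (N + 1) u
        simp only [← mul_assoc, ← Finset.sum_mul]
        rw [this]
        ring
    have hne : ((N + 1 : ℕ) + 1 : K) ≠ 0 := by exact_mod_cast (N + 1).succ_ne_zero
    apply mul_left_cancel₀ hne
    rw [key]
    simp

theorem prod_range_pow_update (i t : ℕ) (c : ℕ → ℕ) (u : ℕ → K) :
    ∏ x ∈ Finset.range (i + 1), u x ^ Function.update c i (c i + t) x =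
      (∏ x ∈ Finset.range (i + 1), u x ^ c x) * u i ^ t := by
  rw [Finset.prod_range_succ, Finset.prod_range_succ, Function.update_self, pow_add, mul_assoc]
  congr 1
  refine Finset.prod_congr rfl fun x hx => ?_
  rw [Function.update_of_ne (Finset.mem_range.1 hx).ne]

theorem sum_range_update {i j : ℕ} (t : ℕ) (c : ℕ → ℕ) (h : j ≤ i) :
    ∑ x ∈ Finset.range j, Function.update c i (c i + t) x = ∑ x ∈ Finset.range j, c x := by
  refine Finset.sum_congr rfl fun x hx => ?_
  have := Finset.mem_range.1 hx
  rw [Function.update_of_ne (by omega)]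

theorem sum_range_succ_update (i t : ℕ) (c : ℕ → ℕ) :
    ∑ x ∈ Finset.range (i + 1), Function.update c i (c i + t) x =
      ∑ x ∈ Finset.range (i + 1), c x + t := by
  rw [Finset.sum_range_succ, Finset.sum_range_succ, Function.update_self,
    sum_range_update _ _ le_rfl, add_assoc]

/-- The effect of moving the tail `u (i + 1) ^ r` of a monomial one step to the left. -/
theorem dsEval_shift [CharZero K] {i k N : ℕ} (hk : 0 < k) (hN : N + 1 ≤ i + 1 + k)
    (c : ℕ → ℕ) (hc : ∑ x ∈ Finset.range (i + 1), c x ≤ N)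
    (ih : ∀ c : ℕ → ℕ, ∑ x ∈ Finset.range (i + 1), c x + 1 ≤ i + 1 →
      ∀ y : Fin (i + 1) → K, Function.Injective y →
      dsEval (i + 1) (fun u => ∏ x ∈ Finset.range (i + 1), u x ^ c x) y =
        if ∑ x ∈ Finset.range (i + 1), c x + 1 = i + 1 then
          (petrov (fun j => ∑ x ∈ Finset.range j, c x) (i + 1) : K) else 0)
    {y : Fin (i + 1 + k) → K} (hy : Function.Injective y) :
    dsEval (i + 1 + k) (fun u => (∏ x ∈ Finset.range (i + 1), u x ^ c x) *
        u (i + 1) ^ (N - ∑ x ∈ Finset.range (i + 1), c x)) y =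
      dsEval (i + 1 + k) (fun u => (∏ x ∈ Finset.range (i + 1), u x ^ c x) *
        u i ^ (N - ∑ x ∈ Finset.range (i + 1), c x)) y -
      if N + 1 = i + 1 + k ∧ ∑ x ∈ Finset.range (i + 1), c x < i + 1 then
        ((i + 1 + k).choose (i + 1) : K) * petrov (fun j => ∑ x ∈ Finset.range j, c x) (i + 1)
      else 0 := by
  set s := ∑ x ∈ Finset.range (i + 1), c x with hs
  set A : K := ((i + 1 + k).choose (i + 1) : K) *
    petrov (fun j => ∑ x ∈ Finset.range j, c x) (i + 1) with hA
  set G : ℕ → (ℕ → K) → K := fun t u =>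
    ∏ x ∈ Finset.range (i + 1), u x ^ Function.update c i (c i + t) x with hG
  have hterm : ∀ t ∈ Finset.range (N - s),
      dsEval (i + 1 + k) (fun u => (u i - u (i + 1)) * (G t u * u (i + 1) ^ (N - s - 1 - t))) y =
        if t = i - s then (if N + 1 = i + 1 + k ∧ s < i + 1 then A else 0) else 0 := by
    intro t ht
    have ht := Finset.mem_range.1 ht
    have hGc : ∀ u v : ℕ → K, (∀ x < i + 1, u x = v x) → G t u = G t v := by
      intro u v h
      refine Finset.prod_congr rfl fun x hx => ?_
      rw [h x (Finset.mem_range.1 hx)]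
    have hsum := sum_range_succ_update i t c
    rw [← hs] at hsum
    have hG1 := ih (Function.update c i (c i + t))
    rw [hsum] at hG1
    rcases lt_trichotomy (s + t + 1) (i + 1) with h | h | h
    · rw [if_neg (by omega)]
      refine dsEval_mul_eq_zero (Nat.succ_pos i) hk (G t) (fun u => u 0 ^ (N - s - 1 - t)) hGc
        (Or.inl fun z hz => ?_) hy
      rw [hG1 h.le z hz, if_neg h.ne]
    · rw [if_pos (by omega)]
      have := dsEval_mul (Nat.succ_pos i) hk (G t) (fun u => u 0 ^ (N - s - 1 - t)) hGc
        (fun z hz => hG1 h.le z hz)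
        (fun z hz => dsEval_pow_zero _ k (by omega) z hz) hy
      rw [if_pos h] at this
      refine this.trans ?_
      rw [petrov_congr (t := fun j => ∑ x ∈ Finset.range j, c x) (i + 1)
        fun j hj => sum_range_update _ _ (by omega)]
      by_cases h' : N + 1 = i + 1 + k
      · rw [if_pos (by omega), if_pos ⟨h', by omega⟩, mul_one]
      · rw [if_neg (by omega), if_neg (fun h => h' h.1), mul_zero]
    · have : (if t = i - s then (if N + 1 = i + 1 + k ∧ s < i + 1 then A else 0) else 0) = 0 := by
        split_ifs <;> first | rfl | omega
      rw [this]
      refine dsEval_mul_eq_zero (Nat.succ_pos i) hk (G t) (fun u => u 0 ^ (N - s - 1 - t)) hGc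
        (Or.inr fun z hz => ?_) hy
      rw [dsEval_pow_zero _ k (by omega) z hz, if_neg (by omega)]
  rw [dsEval_congr (G := fun u => (∏ x ∈ Finset.range (i + 1), u x ^ c x) * u i ^ (N - s) -
      ∑ t ∈ Finset.range (N - s), (u i - u (i + 1)) * (G t u * u (i + 1) ^ (N - s - 1 - t))),
    dsEval_sub, dsEval_sum, Finset.sum_congr rfl hterm, Finset.sum_ite_eq']
  · congr 1
    simp only [Finset.mem_range]
    split_ifs <;> first | rfl | omega
  · intro u
    have := (Commute.all (u i) (u (i + 1))).mul_geom_sum₂ (N - s)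
    simp only [hG, prod_range_pow_update]
    rw [← Finset.mul_sum]
    simp only [mul_assoc]
    rw [← Finset.mul_sum, mul_left_comm, this]
    ring

/-- Petrov's formula for the divided symmetrization of a monomial. -/
theorem dsEval_monomial [CharZero K] (n : ℕ) : ∀ c : ℕ → ℕ, ∑ x ∈ Finset.range n, c x + 1 ≤ n →
    ∀ y : Fin n → K, Function.Injective y →
    dsEval n (fun u => ∏ x ∈ Finset.range n, u x ^ c x) y =
      if ∑ x ∈ Finset.range n, c x + 1 = n then
        (petrov (fun j => ∑ x ∈ Finset.range j, c x) n : K) else 0 := by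
  induction n using Nat.strong_induction_on with
  | _ n ih =>
    intro c hc y hy
    set N := ∑ x ∈ Finset.range n, c x with hN
    have hle : ∀ j ≤ n, ∑ x ∈ Finset.range j, c x ≤ N := fun j hj =>
      Finset.sum_le_sum_of_subset (Finset.range_mono hj)
    have key : ∀ j, j + 1 ≤ n →
        dsEval n (fun u => (∏ x ∈ Finset.range (j + 1), u x ^ c x) *
          u j ^ (N - ∑ x ∈ Finset.range (j + 1), c x)) y =
        if N + 1 = n then 1 - ∑ i ∈ Finset.range (j + 1), (if ∑ x ∈ Finset.range i, c x < i then
          (n.choose i : K) * petrov (fun j => ∑ x ∈ Finset.range j, c x) i else 0) else 0 := by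
      intro j
      induction j with
      | zero =>
        intro hj
        have h := hle 1 hj
        rw [dsEval_congr (G := fun u => u 0 ^ N), dsEval_pow_zero N n hc y hy]
        · simp
        · intro u
          simp only [zero_add, Finset.prod_range_one, Finset.sum_range_one] at h ⊢
          rw [← pow_add, Nat.add_sub_cancel' h]
      | succ j ihj =>
        intro hj
        have h2 := hle (j + 2) hj
        rw [dsEval_congr (G := fun u => (∏ x ∈ Finset.range (j + 1), u x ^ c x) *
          u (j + 1) ^ (N - ∑ x ∈ Finset.range (j + 1), c x))]
        · obtain ⟨k, rfl⟩ : ∃ k, n = j + 1 + k := ⟨n - (j + 1), by omega⟩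
          rw [dsEval_shift (by omega) hc c (hle _ (by omega)) (ih (j + 1) (by omega)) hy,
            ihj (by omega), Finset.sum_range_succ _ (j + 1)]
          split_ifs <;> first | (exfalso; omega) | ring
        · intro u
          rw [Finset.prod_range_succ, mul_assoc, ← pow_add]
          congr 2
          rw [Finset.sum_range_succ] at h2 ⊢
          omega
    have h := key (n - 1) (by omega)
    rw [Nat.sub_add_cancel (by omega : 1 ≤ n), ← hN, Nat.sub_self] at h
    simp only [pow_zero, mul_one] at h
    rw [h, petrov_eq]
    split_ifs
    · push_cast
      rfl
    · rfl

end DividedSymmetrization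

theorem sum_powersetCard_inter_range (F : Finset ℕ → ℤ) (j d : ℕ) : ∀ l : ℕ,
    (∀ s, 0 < s → s ≤ l → ∑ J ∈ Finset.powersetCard s (Finset.range j), F J = 0) →
    ∑ I ∈ Finset.powersetCard l (Finset.range (j + d)), F (I ∩ Finset.range j) =
      d.choose l * F ∅ := by
  induction d with
  | zero =>
    intro l hF
    have : ∀ I ∈ Finset.powersetCard l (Finset.range (j + 0)), F (I ∩ Finset.range j) = F I := by
      intro I hI
      rw [Finset.inter_eq_left.2 (by simpa using (Finset.mem_powersetCard.1 hI).1)]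
    rw [Finset.sum_congr rfl this]
    cases l with
    | zero => simp
    | succ l => simpa using hF (l + 1) l.succ_pos le_rfl
  | succ d ih =>
    intro l hF
    cases l with
    | zero => simp
    | succ l =>
      have hnot : j + d ∉ Finset.range (j + d) := Finset.notMem_range_self
      have hmem : ∀ I ∈ Finset.powersetCard l (Finset.range (j + d)), j + d ∉ I := fun I hI h =>
        hnot ((Finset.mem_powersetCard.1 hI).1 h)
      rw [← add_assoc, Finset.range_add_one, Finset.powersetCard_succ_insert hnot,
        Finset.sum_union, Finset.sum_image, ih _ hF]
      · have : ∀ I ∈ Finset.powersetCard l (Finset.range (j + d)),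
            F (insert (j + d) I ∩ Finset.range j) = F (I ∩ Finset.range j) := by
          intro I _
          rw [Finset.insert_inter_of_notMem (by simp)]
        rw [Finset.sum_congr rfl this, ih _ fun s hs hl => hF s hs (by omega),
          Nat.choose_succ_succ]
        push_cast
        ring
      · intro I hI J hJ h
        rw [← Finset.erase_insert (hmem I hI), h, Finset.erase_insert (hmem J hJ)]
      · rw [Finset.disjoint_left]
        intro I hI hI'
        obtain ⟨J, _, rfl⟩ := Finset.mem_image.1 hI'
        exact hnot ((Finset.mem_powersetCard.1 hI).1 (Finset.mem_insert_self _ _))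

theorem petrov_zero (n : ℕ) (hn : 0 < n) : petrov (fun _ => 0) n = -(-1) ^ n := by
  induction n using Nat.strong_induction_on with
  | _ n ih =>
    have h := Int.alternating_sum_range_choose_of_ne hn.ne'
    obtain ⟨n, rfl⟩ : ∃ k, n = k + 1 := ⟨n - 1, by omega⟩
    rw [Finset.sum_range_succ, Finset.sum_range_succ'] at h
    rw [petrov_eq, Finset.sum_range_succ']
    have : ∀ j ∈ Finset.range n, (if 0 < j + 1 then
        ((n + 1).choose (j + 1) : ℤ) * petrov (fun _ => 0) (j + 1) else 0) =
        -((-1) ^ (j + 1) * ((n + 1).choose (j + 1))) := by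
      intro j hj
      rw [if_pos j.succ_pos, ih _ (by simpa using hj) j.succ_pos, mul_neg, mul_comm]
    rw [Finset.sum_congr rfl this, Finset.sum_neg_distrib]
    simp only [Nat.choose_self, Nat.choose_zero_right, lt_irrefl, if_false] at h ⊢
    push_cast at h ⊢
    linarith

theorem sum_neg_one_pow_mul_choose_mul_choose {j s : ℕ} (hs : 0 < s) (hsj : s < j) :
    ∑ i ∈ Finset.range j, (-1 : ℤ) ^ i * j.choose i * (j - i).choose s = 0 := by
  have hterm : ∀ i ∈ Finset.range j, (-1 : ℤ) ^ i * j.choose i * (j - i).choose s =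
      j.choose s * ((-1) ^ i * (j - s).choose i) := by
    intro i hi
    have h : j.choose i * (j - i).choose s = j.choose s * (j - s).choose i := by
      have h1 := Nat.choose_mul (n := j) (k := i + s) (s := i) (by omega)
      have h2 := Nat.choose_mul (n := j) (k := i + s) (s := s) (by omega)
      rw [Nat.add_sub_cancel_left] at h1
      rw [Nat.add_sub_cancel] at h2
      rw [← h1, ← h2, Nat.choose_symm_add]
    have h' : (j.choose i : ℤ) * (j - i).choose s = j.choose s * (j - s).choose i := by
      exact_mod_cast h
    linear_combination (-1) ^ i * h'
  rw [Finset.sum_congr rfl hterm, ← Finset.mul_sum]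
  have h := Int.alternating_sum_range_choose_of_ne (n := j - s) (by omega)
  have hsub : ∑ i ∈ Finset.range (j - s + 1), (-1 : ℤ) ^ i * (j - s).choose i =
      ∑ i ∈ Finset.range j, (-1 : ℤ) ^ i * (j - s).choose i := by
    refine Finset.sum_subset (Finset.range_mono (by omega)) fun i _ hi => ?_
    rw [Nat.choose_eq_zero_of_lt (by simpa using hi)]
    simp
  rw [← hsub, h, mul_zero]

/-- Summing Petrov's coefficients over all placements of `l` parts in the first `m` positions. -/
theorem sum_petrov_powersetCard {L : ℕ} {σ : ℕ → ℕ} (h0 : σ 0 = 0) (hσ : ∀ s ≤ L, s ≤ σ s)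
    (n : ℕ) : 0 < n → ∀ m l : ℕ, l ≤ L → (∀ j < n, m < j → j ≤ σ l) →
    ∑ I ∈ Finset.powersetCard l (Finset.range m),
        petrov (fun j => σ (I ∩ Finset.range j).card) n =
      ∑ j ∈ Finset.range n,
        if j ≤ m then (-1 : ℤ) ^ j * n.choose j * (m - j).choose l else 0 := by
  induction n using Nat.strong_induction_on with
  | _ n ih =>
    intro hn m l hl hm
    have hE : ∀ j < n, ∀ s, 0 < s → s ≤ l → σ s < j →
        ∑ J ∈ Finset.powersetCard s (Finset.range j),
          petrov (fun i => σ (J ∩ Finset.range i).card) j = 0 := by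
      intro j hj s hs hsl hsj
      have hlt : s < j := (hσ s (hsl.trans hl)).trans_lt hsj
      rw [ih j hj (by omega) j s (hsl.trans hl) fun i hi hji => by omega,
        ← sum_neg_one_pow_mul_choose_mul_choose hs hlt]
      exact Finset.sum_congr rfl fun i hi => if_pos (Finset.mem_range.1 hi).le
    have hinner : ∀ j < n, ∑ I ∈ Finset.powersetCard l (Finset.range m),
        (if σ (I ∩ Finset.range j).card < j then
          petrov (fun i => σ (I ∩ Finset.range i).card) j else 0) =
        if 0 < j ∧ j ≤ m then -((-1 : ℤ) ^ j * (m - j).choose l) else 0 := by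
      intro j hj
      rcases Nat.eq_zero_or_pos j with rfl | hj0
      · simp
      rcases le_or_gt j m with hjm | hjm
      · rw [if_pos ⟨hj0, hjm⟩]
        obtain ⟨d, rfl⟩ := Nat.exists_eq_add_of_le hjm
        have := sum_powersetCard_inter_range (fun J => if σ J.card < j then
          petrov (fun i => σ (J ∩ Finset.range i).card) j else 0) j d l ?_
        · simp only [Finset.card_empty, h0, if_pos hj0, Finset.empty_inter,
            petrov_zero j hj0] at this
          rw [Nat.add_sub_cancel_left, mul_comm, ← mul_neg, ← this]
          refine Finset.sum_congr rfl fun I _ => ?_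
          congr 1
          refine petrov_congr j fun i hi => ?_
          rw [Finset.inter_assoc, Finset.inter_eq_right.2 (Finset.range_mono hi.le)]
        · intro s hs hsl
          have : ∀ J ∈ Finset.powersetCard s (Finset.range j), (if σ J.card < j then
              petrov (fun i => σ (J ∩ Finset.range i).card) j else 0) =
              if σ s < j then petrov (fun i => σ (J ∩ Finset.range i).card) j else 0 := by
            intro J hJ
            rw [(Finset.mem_powersetCard.1 hJ).2]
          rw [Finset.sum_congr rfl this]
          by_cases h : σ s < j
          · simpa only [if_pos h] using hE j hj s hs hsl h
          · simp only [if_neg h, Finset.sum_const_zero]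
      · rw [if_neg (by omega)]
        refine Finset.sum_eq_zero fun I hI => ?_
        obtain ⟨hI1, hI2⟩ := Finset.mem_powersetCard.1 hI
        rw [Finset.inter_eq_left.2 (hI1.trans (Finset.range_mono hjm.le)), hI2,
          if_neg (hm j hj hjm).not_gt]
    have hswap : ∑ I ∈ Finset.powersetCard l (Finset.range m),
        petrov (fun j => σ (I ∩ Finset.range j).card) n =
        m.choose l - ∑ j ∈ Finset.range n, (n.choose j : ℤ) *
          ∑ I ∈ Finset.powersetCard l (Finset.range m), (if σ (I ∩ Finset.range j).card < j then
            petrov (fun i => σ (I ∩ Finset.range i).card) j else 0) := by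
      rw [Finset.sum_congr rfl fun I _ => petrov_eq _ n, Finset.sum_sub_distrib, Finset.sum_comm]
      simp only [Finset.mul_sum, mul_ite, mul_zero, Finset.sum_const, Finset.card_powersetCard,
        Finset.card_range, nsmul_eq_mul, mul_one]
    rw [hswap, Finset.sum_congr rfl fun j hj => by rw [hinner j (Finset.mem_range.1 hj)]]
    obtain ⟨n, rfl⟩ : ∃ k, n = k + 1 := ⟨n - 1, by omega⟩
    rw [Finset.sum_range_succ', Finset.sum_range_succ' _ n]
    simp only [Nat.succ_pos, true_and, lt_irrefl, false_and, if_false, mul_zero, add_zero,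
      Nat.zero_le, if_true, pow_zero, one_mul, Nat.choose_zero_right, Nat.cast_one, Nat.sub_zero]
    rw [sub_eq_neg_add, ← Finset.sum_neg_distrib]
    congr 1
    refine Finset.sum_congr rfl fun j _ => ?_
    split_ifs <;> ring

section Placements

variable {R : Type*} [CommRing R]

theorem sum_strictMono_eq_sum_powersetCard {m l : ℕ} (g : Finset ℕ → R) :
    ∑ f ∈ Finset.univ.filter (fun f : Fin l → Fin m => StrictMono f),
        g (Finset.univ.image fun j => (f j : ℕ)) =
      ∑ I ∈ Finset.powersetCard l (Finset.range m), g I := by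
  refine Finset.sum_bij (fun f _ => Finset.univ.image fun j => (f j : ℕ)) ?_ ?_ ?_ ?_
  · intro f hf
    have hf : StrictMono f := (Finset.mem_filter.1 hf).2
    rw [Finset.mem_powersetCard]
    constructor
    · intro k hk
      obtain ⟨j, _, rfl⟩ := Finset.mem_image.1 hk
      exact Finset.mem_range.2 (f j).isLt
    · have hinj : Function.Injective fun j => (f j : ℕ) := Fin.val_injective.comp hf.injective
      rw [Finset.card_image_of_injective _ hinj, Finset.card_univ, Fintype.card_fin]
  · intro f hf f' hf' h
    have hf : StrictMono f := (Finset.mem_filter.1 hf).2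
    have hf' : StrictMono f' := (Finset.mem_filter.1 hf').2
    have h1 : StrictMono fun j => (f j : ℕ) := hf
    have h2 : StrictMono fun j => (f' j : ℕ) := hf'
    have h3 : Set.range (fun j => (f j : ℕ)) = Set.range fun j => (f' j : ℕ) := by
      have := congrArg (fun s : Finset ℕ => (s : Set ℕ)) h
      simpa using this
    funext j
    exact Fin.ext (congrFun ((h1.range_inj h2).1 h3) j)
  · intro I hI
    obtain ⟨hI1, hI2⟩ := Finset.mem_powersetCard.1 hI
    refine ⟨fun j => ⟨I.orderEmbOfFin hI2 j,
      Finset.mem_range.1 (hI1 (I.orderEmbOfFin_mem hI2 j))⟩, ?_, ?_⟩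
    · exact Finset.mem_filter.2 ⟨Finset.mem_univ _, fun i j hij =>
        (I.orderEmbOfFin hI2).strictMono hij⟩
    · exact I.image_orderEmbOfFin_univ hI2
  · intro f _
    rfl

theorem prod_image_pow_card_inter_range {m l : ℕ} {f : Fin l → Fin m} (hf : StrictMono f)
    (a : ℕ → ℕ) (u : ℕ → R) :
    ∏ k ∈ Finset.univ.image (fun j => (f j : ℕ)),
        u k ^ a (Finset.univ.image (fun j => (f j : ℕ)) ∩ Finset.range k).card =
      ∏ j, u (f j) ^ a j := by
  have hinj : Function.Injective fun j => (f j : ℕ) := Fin.val_injective.comp hf.injective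
  rw [Finset.prod_image hinj.injOn]
  refine Finset.prod_congr rfl fun j _ => ?_
  have : Finset.univ.image (fun j => (f j : ℕ)) ∩ Finset.range (f j) =
      (Finset.Iio j).image fun j => (f j : ℕ) := by
    ext k
    simp only [Finset.mem_inter, Finset.mem_image, Finset.mem_univ, true_and, Finset.mem_range,
      Finset.mem_Iio]
    constructor
    · rintro ⟨⟨i, rfl⟩, hi⟩
      exact ⟨i, hf.lt_iff_lt.1 hi, rfl⟩
    · rintro ⟨i, hi, rfl⟩
      exact ⟨⟨i, rfl⟩, hf hi⟩
  rw [this, Finset.card_image_of_injective _ hinj, Fin.card_Iio]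

theorem sum_range_ite_mem (I : Finset ℕ) (a : ℕ → ℕ) (j : ℕ) :
    ∑ k ∈ Finset.range j, (if k ∈ I then a (I ∩ Finset.range k).card else 0) =
      ∑ i ∈ Finset.range (I ∩ Finset.range j).card, a i := by
  induction j with
  | zero => simp
  | succ j ih =>
    rw [Finset.sum_range_succ, ih, Finset.range_add_one]
    by_cases h : j ∈ I
    · rw [if_pos h, Finset.inter_insert_of_mem h, Finset.card_insert_of_notMem (by simp),
        Finset.sum_range_succ]
    · rw [if_neg h, Finset.inter_insert_of_notMem h, add_zero]

theorem prod_range_pow_ite_mem {n : ℕ} {I : Finset ℕ} (hI : I ⊆ Finset.range n) (b : ℕ → ℕ)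
    (u : ℕ → R) :
    ∏ k ∈ Finset.range n, u k ^ (if k ∈ I then b k else 0) = ∏ k ∈ I, u k ^ b k := by
  simp only [pow_ite, pow_zero]
  rw [Finset.prod_ite_mem, Finset.inter_eq_right.2 hI]

end Placements

theorem eval_one_Mq (m l : ℕ) (α : Fin l → ℕ) :
    eval (fun _ => (1 : ℚ)) (Mq m l α) = m.choose l := by
  have := sum_strictMono_eq_sum_powersetCard (m := m) (l := l) (fun _ => (1 : ℚ))
  simp only [Mq, map_sum, map_prod, map_pow, eval_X, one_pow, Finset.prod_const_one]
  rw [this]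
  simp

theorem aeval_Mq {K : Type*} [Field K] [Algebra ℚ K] {m l : ℕ} (α : Fin l → ℕ) (a : ℕ → ℕ)
    (ha : ∀ j : Fin l, a j = α j) (u : ℕ → K) :
    aeval (fun i : Fin m => u i) (Mq m l α) =
      ∑ I ∈ Finset.powersetCard l (Finset.range m),
        ∏ k ∈ I, u k ^ a (I ∩ Finset.range k).card := by
  rw [← sum_strictMono_eq_sum_powersetCard]
  simp only [Mq, map_sum, map_prod, map_pow, aeval_X, ← ha]
  refine Finset.sum_congr rfl fun f hf => ?_
  rw [prod_image_pow_card_inter_range (Finset.mem_filter.1 hf).2]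

theorem dsEval_aeval_Mq {K : Type*} [Field K] [CharZero K] [Algebra ℚ K] {n m l : ℕ}
    (hn : 1 ≤ n) (h1 : 1 ≤ m) (hm : m ≤ n) (α : Fin l → ℕ) (hα : ∀ j, 1 ≤ α j)
    (hsum : ∑ j, α j = n - 1) {y : Fin n → K} (hy : Function.Injective y) :
    dsEval n (fun u => aeval (fun i : Fin m => u i) (Mq m l α)) y =
      ∑ i ∈ Finset.range m, (-1) ^ i * (n.choose i : K) * (m - i).choose l := by
  set a : ℕ → ℕ := fun k => if h : k < l then α ⟨k, h⟩ else 0 with ha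
  set σ : ℕ → ℕ := fun s => ∑ i ∈ Finset.range s, a i with hσ
  have haα : ∀ j : Fin l, a j = α j := fun j => dif_pos j.isLt
  have hσl : σ l = n - 1 := by
    rw [← hsum, hσ]
    simp only [Finset.sum_range, haα]
  have hσle : ∀ s ≤ l, s ≤ σ s := by
    intro s hs
    have : ∑ i ∈ Finset.range s, 1 ≤ σ s := Finset.sum_le_sum fun i hi => by
      have hi : i < l := (Finset.mem_range.1 hi).trans_le hs
      simpa only [ha, dif_pos hi] using hα ⟨i, hi⟩
    simpa using this
  have hterm : ∀ I ∈ Finset.powersetCard l (Finset.range m),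
      dsEval n (fun u => ∏ k ∈ I, u k ^ a (I ∩ Finset.range k).card) y =
        (petrov (fun j => σ (I ∩ Finset.range j).card) n : K) := by
    intro I hI
    obtain ⟨hI1, hI2⟩ := Finset.mem_powersetCard.1 hI
    have hIn : I ⊆ Finset.range n := hI1.trans (Finset.range_mono hm)
    have htot := sum_range_ite_mem I a n
    rw [Finset.inter_eq_left.2 hIn, hI2, show ∑ i ∈ Finset.range l, a i = n - 1 from hσl] at htot
    rw [dsEval_congr fun u => (prod_range_pow_ite_mem hIn _ u).symm,
      dsEval_monomial n _ (by omega) y hy, if_pos (by omega)]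
    simp only [sum_range_ite_mem, hσ]
  have hcomb := sum_petrov_powersetCard (σ := σ) (L := l) (by simp [hσ]) hσle n hn m l le_rfl
    (fun j hj _ => by omega)
  rw [dsEval_congr (aeval_Mq α a haα), dsEval_sum, Finset.sum_congr rfl hterm, ← Int.cast_sum,
    hcomb, ← Finset.sum_filter]
  push_cast
  have hl := hσle l le_rfl
  rcases hm.eq_or_lt with rfl | hlt
  · rw [Finset.filter_true_of_mem fun j hj => (Finset.mem_range.1 hj).le]
  · have hl0 : 0 < l := by
      rcases Nat.eq_zero_or_pos l with rfl | h
      · have : σ 0 = 0 := by simp [hσ]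
        omega
      · exact h
    have : (Finset.range n).filter (· ≤ m) = Finset.range (m + 1) := by
      ext j
      simp only [Finset.mem_filter, Finset.mem_range]
      omega
    rw [this, Finset.sum_range_succ, Nat.sub_self, Nat.choose_eq_zero_of_lt hl0]
    simp

theorem DS_rename_castLE {n m : ℕ} (hm : m ≤ n) (p : MvPolynomial (Fin m) ℚ) :
    DS n (rename (Fin.castLE hm) p) = dsEval n (fun u => aeval (fun i : Fin m => u i) p)
      (fun i => algebraMap (MvPolynomial (Fin n) ℚ) (FractionRing (MvPolynomial (Fin n) ℚ))
        (X i)) := by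
  refine Finset.sum_congr rfl fun w _ => ?_
  have hval : ∀ k (hk : k < n), extendZero ((fun i => algebraMap (MvPolynomial (Fin n) ℚ)
      (FractionRing (MvPolynomial (Fin n) ℚ)) (X i)) ∘ w) k =
      algebraMap _ _ (X (w ⟨k, hk⟩)) := fun k hk => extendZero_of_lt _ hk
  congr 1
  · have : rename w (rename (Fin.castLE hm) p) =
        aeval (fun i : Fin m => (X (w (Fin.castLE hm i)) : MvPolynomial (Fin n) ℚ)) p := by
      rw [rename_rename, rename_eq_aeval]
      rfl
    rw [this, ← IsScalarTower.toAlgHom_apply ℚ, ← AlgHom.comp_apply, comp_aeval]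
    congr 2
    funext i
    exact (hval i (i.isLt.trans_le hm)).symm
  · rw [denomDS, diffProd, Finset.prod_range, map_prod, map_prod]
    refine Finset.prod_congr rfl fun i _ => ?_
    rw [hval _ (by omega), hval _ (by omega), map_sub, map_sub, rename_X, rename_X]

/-- For a quasisymmetric function `f` of degree `n-1` and `1 ≤ m ≤ n`,
`⟨f(x_1,...,x_m)⟩_n = Σ_{i=0}^{m-1} (-1)^i C(n,i) f(1^{m-i})`. -/
theorem stmt17 (n : ℕ) (hn : 1 ≤ n) (c : Composition (n - 1) → ℚ)
    (m : ℕ) (h1 : 1 ≤ m) (hm : m ≤ n) :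
    DS n (rename (Fin.castLE hm) (Pq n c m)) =
      algebraMap ℚ (FractionRing (MvPolynomial (Fin n) ℚ))
        (∑ i ∈ Finset.range m,
          (-1 : ℚ) ^ i * (n.choose i : ℚ) * eval (fun _ => (1 : ℚ)) (Pq n c (m - i))) := by
  have hinj : Function.Injective fun i : Fin n =>
      algebraMap (MvPolynomial (Fin n) ℚ) (FractionRing (MvPolynomial (Fin n) ℚ)) (X i) :=
    (IsFractionRing.injective _ _).comp X_injective
  have : CharZero (FractionRing (MvPolynomial (Fin n) ℚ)) :=
    algebraRat.charZero _
  rw [DS_rename_castLE, dsEval_congr (G := fun u => ∑ α : Composition (n - 1),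
    algebraMap ℚ _ (c α) * aeval (fun i : Fin m => u i) (Mq m α.length α.blocksFun)), dsEval_sum]
  · have hterm : ∀ α : Composition (n - 1), dsEval n (fun u => algebraMap ℚ _ (c α) *
        aeval (fun i : Fin m => u i) (Mq m α.length α.blocksFun))
        (fun i => algebraMap (MvPolynomial (Fin n) ℚ) (FractionRing (MvPolynomial (Fin n) ℚ))
          (X i)) = _ := fun α => by
      rw [dsEval_const_mul, dsEval_aeval_Mq hn h1 hm _ α.one_le_blocksFun α.sum_blocksFun hinj]
    rw [Finset.sum_congr rfl fun α _ => hterm α]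
    simp only [Pq, map_sum, smul_eval, eval_one_Mq, Finset.mul_sum, map_mul, map_pow, map_neg,
      map_one, map_natCast]
    rw [Finset.sum_comm]
    exact Finset.sum_congr rfl fun i _ => Finset.sum_congr rfl fun α _ => by ring
  · intro u
    simp only [Pq, map_sum, smul_eq_C_mul, map_mul, aeval_C]
end
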